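/- For all g,h,s ∈ Z_n^m the following identity holds in k: Σ_{a ∈ Z_n^m} F_GCA(a, g−a)^{−1} · F_GCA(s−a, h−s+a)^{−1} · R_GCA(g−a, s−a) · F_GCA(a, s−a) · F_GCA(g−a, h−s+a) = n^m · F_GCA(g,h) · F_GCA(s, g+h−s)^{−1}. (This scalar identity expresses that the comultiplication Δ(u_g) = n^{−m} Σ_{h} F_GCA(h, g−h)^{−1} u_h ⊗ u_{g−h} on the twisted group algebra k_{F_GCA}[Z_n^m] — i.e., on the generalized Clifford algebra C^{(n)}(q_1,…,q_m) — is multiplicative with respect to the R_GCA-braided tensor product.) -/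

import Mathlib

open Finset

/-- The 2-cochain `F_GCA` on `(ℤ/nℤ)^m`. -/
noncomputable def Fgca {k : Type*} [Field k] (n m : ℕ) (ω : k) (q : Fin m → k)
    (g h : Fin m → ZMod n) : k :=
  ω ^ (∑ i : Fin m, ∑ j : Fin m, if j < i then (g i).val * (h j).val else 0) *
    ∏ i : Fin m, q i ^ (((g i).val + (h i).val) / n)

/-- The braiding `R_GCA` on `(ℤ/nℤ)^m`. -/
noncomputable def Rgca {k : Type*} [Field k] (n m : ℕ) (ω : k)
    (g h : Fin m → ZMod n) : k :=
  ω ^ (∑ i : Fin m, ∑ j : Fin m,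
    if j < i then ((g i).val * (h j).val - (g j).val * (h i).val : ℤ) else 0)

/-!
For a 2-cocycle `F` on a commutative group, bracketing the four-fold product
`u_a u_b u_c u_d = F(a,b) F(c,d) F(a+b,c+d) u_{a+b+c+d}` of the twisted group algebra so that `u_b`
and `u_c` are multiplied first shows that swapping `b` and `c` costs exactly `F(b,c) / F(c,b)`.
With `b = g - a`, `c = s - a`, `d = h - s + a`, every summand of the identity is therefore
independent of `a`. The cochain `F_GCA` is such a cocycle, being an additive character of a
bilinear form times powers `q_i ^ carry`, and `R_GCA(g,h) = F_GCA(g,h) / F_GCA(h,g)` since the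
second factor is symmetric.
-/

/-- The 2-cocycle condition on an additive `G`, for multiplicative coefficients with trivial action.
Mathlib's `groupCohomology.IsMulCocycle₂` asks for a multiplicative `G` acting on the
coefficients. -/
def IsTwoCocycle {G M : Type*} [Add G] [Mul M] (F : G → G → M) : Prop :=
  ∀ a b c, F a b * F (a + b) c = F b c * F a (b + c)

namespace IsTwoCocycle

variable {G H M ι : Type*}

theorem mul [Add G] [CommSemigroup M] {F F' : G → G → M} (hF : IsTwoCocycle F)
    (hF' : IsTwoCocycle F') : IsTwoCocycle fun g h ↦ F g h * F' g h := fun a b c ↦ by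
  simp only [mul_mul_mul_comm (F _ _) (F' _ _), hF a b c, hF' a b c]

theorem prod [Add G] [CommMonoid M] {s : Finset ι} {F : ι → G → G → M}
    (hF : ∀ i ∈ s, IsTwoCocycle (F i)) : IsTwoCocycle fun g h ↦ ∏ i ∈ s, F i g h := fun a b c ↦ by
  simp only [← prod_mul_distrib]
  exact prod_congr rfl fun i hi ↦ hF i hi a b c

theorem comp_addHom [Add G] [Add H] [Mul M] {F : H → H → M} (hF : IsTwoCocycle F) (f : G →ₙ+ H) :
    IsTwoCocycle fun g h ↦ F (f g) (f h) := fun a b c ↦ by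
  simpa only [map_add] using hF (f a) (f b) (f c)

theorem mul_mul_eq_inner_first [AddSemigroup G] [CommSemigroup M] {F : G → G → M}
    (hF : IsTwoCocycle F) (a b c d : G) :
    F a b * F c d * F (a + b) (c + d) = F b c * F a (b + c) * F (a + (b + c)) d :=
  calc F a b * F c d * F (a + b) (c + d)
      = F a b * (F (a + b) c * F (a + b + c) d) := by rw [hF (a + b) c d, mul_assoc]
    _ = F b c * F a (b + c) * F (a + (b + c)) d := by rw [← mul_assoc, hF a b c, add_assoc]

theorem mul_eq_mul_of_swap [AddCommSemigroup G] [CommSemigroup M] {F : G → G → M}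
    (hF : IsTwoCocycle F) (a b c d : G) :
    F c b * (F a b * F c d * F (a + b) (c + d)) = F b c * (F a c * F b d * F (a + c) (b + d)) := by
  rw [hF.mul_mul_eq_inner_first a b c d, hF.mul_mul_eq_inner_first a c b d, add_comm c b]
  simp only [mul_assoc, mul_left_comm (F c b)]

theorem inv_mul_inv_mul_braiding [AddCommSemigroup G] [CommGroupWithZero M] {F R : G → G → M}
    (hF : IsTwoCocycle F) (hF₀ : ∀ g h, F g h ≠ 0) (hR : ∀ g h, R g h * F h g = F g h)
    (a b c d : G) :
    (F a b)⁻¹ * (F c d)⁻¹ * R b c * F a c * F b d = F (a + b) (c + d) * (F (a + c) (b + d))⁻¹ := by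
  have hswap : F a b * F c d * F (a + b) (c + d) =
      R b c * (F a c * F b d * F (a + c) (b + d)) := by
    refine mul_left_cancel₀ (hF₀ c b) ?_
    rw [hF.mul_eq_mul_of_swap, ← hR b c, mul_comm (R b c), mul_assoc]
  rw [eq_mul_inv_iff_mul_eq₀ (hF₀ _ _)]
  refine mul_left_cancel₀ (mul_ne_zero (hF₀ a b) (hF₀ c d)) ?_
  rw [hswap]
  field_simp [hF₀ a b, hF₀ c d]

theorem sum_braiding_eq_card_mul [AddCommGroup G] [Fintype G] [Semifield M] {F R : G → G → M}
    (hF : IsTwoCocycle F) (hF₀ : ∀ g h, F g h ≠ 0) (hR : ∀ g h, R g h * F h g = F g h)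
    (g h s : G) :
    ∑ a, (F a (g - a))⁻¹ * (F (s - a) (h - s + a))⁻¹ * R (g - a) (s - a) * F a (s - a) *
        F (g - a) (h - s + a) =
      Fintype.card G * F g h * (F s (g + h - s))⁻¹ := by
  have hterm (a : G) : (F a (g - a))⁻¹ * (F (s - a) (h - s + a))⁻¹ * R (g - a) (s - a) *
      F a (s - a) * F (g - a) (h - s + a) = F g h * (F s (g + h - s))⁻¹ := by
    rw [hF.inv_mul_inv_mul_braiding hF₀ hR, add_sub_cancel, add_sub_cancel,
      show s - a + (h - s + a) = h by abel, show g - a + (h - s + a) = g + h - s by abel]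
  rw [sum_congr rfl fun a _ ↦ hterm a, sum_const, card_univ, nsmul_eq_mul, mul_assoc]

end IsTwoCocycle

theorem isTwoCocycle_addChar_comp_bilinMap {R V N M : Type*} [CommSemiring R] [AddCommMonoid V]
    [AddCommMonoid N] [Module R V] [Module R N] [CommMonoid M] (χ : AddChar N M)
    (β : LinearMap.BilinMap R V N) : IsTwoCocycle fun g h ↦ χ (β g h) := fun a b c ↦ by
  simp only [map_add, LinearMap.add_apply, AddChar.map_add_eq_mul]
  ac_rfl

section Carry

variable {n : ℕ} [NeZero n]

theorem zmod_mul_carry_add_val_add (x y : ZMod n) :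
    n * ((x.val + y.val) / n) + (x + y).val = x.val + y.val := by
  rw [ZMod.val_add, Nat.div_add_mod]

theorem zmod_carry_cocycle (x y z : ZMod n) :
    (x.val + y.val) / n + ((x + y).val + z.val) / n =
      (y.val + z.val) / n + (x.val + (y + z).val) / n := by
  refine Nat.eq_of_mul_eq_mul_left (NeZero.pos n) ?_
  have hxy := zmod_mul_carry_add_val_add x y
  have hxy_z := zmod_mul_carry_add_val_add (x + y) z
  have hyz := zmod_mul_carry_add_val_add y z
  have hx_yz := zmod_mul_carry_add_val_add x (y + z)
  rw [add_assoc] at hxy_z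
  lia

theorem isTwoCocycle_pow_carry {M : Type*} [Monoid M] (q : M) :
    IsTwoCocycle fun x y : ZMod n ↦ q ^ ((x.val + y.val) / n) := fun x y z ↦ by
  simp only [← pow_add, zmod_carry_cocycle]

end Carry

theorem zmodChar_intCast {M : Type*} [DivisionCommMonoid M] {n : ℕ} [NeZero n] {ω : M}
    (hω : ω ^ n = 1) (z : ℤ) :
    AddChar.zmodChar n hω z = ω ^ z := by
  rw [← zsmul_one, AddChar.map_zsmul_eq_zpow, ← Nat.cast_one, AddChar.zmodChar_apply', pow_one]

/-- The bilinear form `(x, y) ↦ ∑_{j < i} x_i y_j`, whose reduction modulo `n` gives the exponents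
of `ω` in `F_GCA` and `R_GCA`. -/
noncomputable def strictLowerForm (A ι : Type*) [CommSemiring A] [Fintype ι] [LinearOrder ι] :
    LinearMap.BilinForm A (ι → A) :=
  Matrix.toBilin' (.of fun i j ↦ if j < i then 1 else 0)

theorem strictLowerForm_apply {A ι : Type*} [CommSemiring A] [Fintype ι] [LinearOrder ι]
    (x y : ι → A) :
    strictLowerForm A ι x y = ∑ i, ∑ j, if j < i then x i * y j else 0 := by
  simp [strictLowerForm, Matrix.toBilin'_apply]

section GCA

variable {k : Type*} [Field k] {n m : ℕ} [NeZero n] {ω : k}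

theorem fgca_eq_zmodChar_mul_prod (hω : ω ^ n = 1) (q : Fin m → k) (g h : Fin m → ZMod n) :
    Fgca n m ω q g h = AddChar.zmodChar n hω (strictLowerForm (ZMod n) (Fin m) g h) *
      ∏ i, q i ^ (((g i).val + (h i).val) / n) := by
  rw [Fgca, ← AddChar.zmodChar_apply' hω]
  simp [strictLowerForm_apply]

theorem rgca_eq_zmodChar_sub (hω : ω ^ n = 1) (g h : Fin m → ZMod n) :
    Rgca n m ω g h = AddChar.zmodChar n hω
      (strictLowerForm (ZMod n) (Fin m) g h - strictLowerForm (ZMod n) (Fin m) h g) := by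
  rw [Rgca, ← zmodChar_intCast hω]
  simp [strictLowerForm_apply, ← sum_sub_distrib, ite_sub_ite, mul_comm (h _)]

theorem fgca_ne_zero (hω : ω ^ n = 1) {q : Fin m → k} (hq : ∀ i, q i ≠ 0) (g h : Fin m → ZMod n) :
    Fgca n m ω q g h ≠ 0 := by
  rw [fgca_eq_zmodChar_mul_prod hω]
  exact mul_ne_zero (AddChar.val_isUnit _ _).ne_zero
    (prod_ne_zero_iff.2 fun i _ ↦ pow_ne_zero _ (hq i))

theorem isTwoCocycle_fgca (hω : ω ^ n = 1) (q : Fin m → k) : IsTwoCocycle (Fgca n m ω q) := by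
  have hcarry (i : Fin m) :
      IsTwoCocycle fun g h : Fin m → ZMod n ↦ q i ^ (((g i).val + (h i).val) / n) :=
    (isTwoCocycle_pow_carry (q i)).comp_addHom (Pi.evalAddHom (fun _ ↦ ZMod n) i)
  simpa only [← fgca_eq_zmodChar_mul_prod] using
    (isTwoCocycle_addChar_comp_bilinMap (AddChar.zmodChar n hω) (strictLowerForm _ _)).mul
      (IsTwoCocycle.prod (s := univ) fun i _ ↦ hcarry i)

theorem rgca_mul_fgca_swap (hω : ω ^ n = 1) (q : Fin m → k) (g h : Fin m → ZMod n) :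
    Rgca n m ω g h * Fgca n m ω q h g = Fgca n m ω q g h := by
  simp only [rgca_eq_zmodChar_sub hω, fgca_eq_zmodChar_mul_prod hω, ← mul_assoc,
    ← AddChar.map_add_eq_mul, sub_add_cancel, add_comm (h _).val]

end GCA

theorem gca_comul_multiplicative_scalar_general {k : Type*} [Field k] {n m : ℕ} [NeZero n] {ω : k}
    (hω : ω ^ n = 1) {q : Fin m → k} (hq : ∀ i, q i ≠ 0) (g h s : Fin m → ZMod n) :
    ∑ a : Fin m → ZMod n,
        (Fgca n m ω q a (g - a))⁻¹ * (Fgca n m ω q (s - a) (h - s + a))⁻¹ *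
          Rgca n m ω (g - a) (s - a) * Fgca n m ω q a (s - a) *
            Fgca n m ω q (g - a) (h - s + a) =
      (n : k) ^ m * Fgca n m ω q g h * (Fgca n m ω q s (g + h - s))⁻¹ := by
  simpa only [Fintype.card_pi_const, ZMod.card, Nat.cast_pow] using
    (isTwoCocycle_fgca hω q).sum_braiding_eq_card_mul (fgca_ne_zero hω hq)
      (rgca_mul_fgca_swap hω q) g h s

/-- The scalar identity expressing that the comultiplication
`Δ(u_g) = n^{-m} Σ_h F_GCA(h, g-h)⁻¹ u_h ⊗ u_{g-h}` on the twisted group algebra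
`k_{F_GCA}[(ℤ/nℤ)^m]`, i.e., on the generalized Clifford algebra
`C^{(n)}(q_1,…,q_m)`, is multiplicative with respect to the `R_GCA`-braided
tensor product. -/
theorem gca_comul_multiplicative_scalar {k : Type*} [Field k] (n m : ℕ)
    (hn : 2 ≤ n) (hm : 1 ≤ m) (hchar : (n : k) ≠ 0) [NeZero n]
    (ω : k) (hω : IsPrimitiveRoot ω n) (q : Fin m → k) (hq : ∀ i, q i ≠ 0) :
    ∀ g h s : Fin m → ZMod n,
      ∑ a : Fin m → ZMod n,
          (Fgca n m ω q a (g - a))⁻¹ * (Fgca n m ω q (s - a) (h - s + a))⁻¹ *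
            Rgca n m ω (g - a) (s - a) * Fgca n m ω q a (s - a) *
              Fgca n m ω q (g - a) (h - s + a) =
        (n : k) ^ m * Fgca n m ω q g h * (Fgca n m ω q s (g + h - s))⁻¹ :=
  gca_comul_multiplicative_scalar_general hω.pow_eq_one hq
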